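/- Let Q ≪ P be probability measures with r = dQ/dP and width function w_P(h) = P{r ≥ h}. Let H be a nonnegative real random variable with probability density w_P. Then the channel simulation divergence D_CS(Q‖P) = -∫₀^∞ w_P(h) · log₂ w_P(h) dh and the Kullback–Leibler divergence D_KL(Q‖P) (in bits) satisfy D_CS(Q‖P) - D_KL(Q‖P) = h(ln H) - log₂ e, where h(ln H) denotes the differential entropy (in bits) of the random variable ln H. -/

import Mathlib

open MeasureTheory Real

/-!
If `H` has density `f` on `(0, ∞)`, then `log H` has density `t ↦ exp t * f (exp t)`, and the
substitution `h = exp t` gives `h(log H) = -∫ f(h) log (h * f(h)) dh = h(H) - E[log H]`.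
When `f` is the width function `w` of `r = dQ/dP`, Fubini on the region below the graph of `r` gives
`E[log H] = ∫ w(h) log h dh = E_P[∫₀^r log h dh] = E_P[r log r - r] = D_KL(Q‖P) - 1` in nats, while
`h(H)` is the channel simulation divergence.

The density `g` of `log H` may fail to be measurable, so it need not agree almost everywhere
with `t ↦ exp t * f (exp t)`; the integrands `y log y` of the two entropies do agree, because
`g log g` is integrable, hence almost everywhere measurable.
-/

open Set

section Densities

variable {α : Type*} [MeasurableSpace α] {μ : Measure α} [SigmaFinite μ]

lemma ae_le_of_withDensity_le {u v : α → ENNReal} (hu : Measurable u)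
    (h : μ.withDensity u ≤ μ.withDensity v) : u ≤ᵐ[μ] v := by
  refine ae_le_of_forall_setLIntegral_le_of_sigmaFinite hu fun s hs _ ↦ ?_
  simpa only [withDensity_apply _ hs] using h s

lemma comp_ae_eq_comp_of_withDensity_eq {E : Type*} [TopologicalSpace E] [T2Space E]
    [MeasurableSpace E] [OpensMeasurableSpace E] {u v : α → ℝ} {φ : ℝ → E}
    (hu : 0 ≤ u) (hv : Measurable v) (hv_nonneg : 0 ≤ v) (hφ : Continuous φ)
    (hφu : AEMeasurable (φ ∘ u) μ)
    (h : (μ.withDensity fun x ↦ ENNReal.ofReal (u x)) =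
      μ.withDensity fun x ↦ ENNReal.ofReal (v x)) :
    φ ∘ u =ᵐ[μ] φ ∘ v := by
  obtain ⟨m, hm, hum⟩ := hφu
  have hvu : ∀ᵐ x ∂μ, v x ≤ u x := by
    filter_upwards [ae_le_of_withDensity_le hv.ennreal_ofReal h.ge] with x hx
    exact (ENNReal.ofReal_le_ofReal_iff (hu x)).1 hx
  -- If `m x ∉ φ '' [p, q]`, then `v x ≤ u x` lies outside `[p, q]`, so `u x > q`. The constant `q`
  -- on the set of such `x` is thus a measurable minorant of `u`, hence of `v`.
  have not_separated (p q : ℚ) :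
      ∀ᵐ x ∂μ, ¬ (v x ∈ Ioo (p : ℝ) q ∧ m x ∉ φ '' Icc (p : ℝ) q) := by
    set A := v ⁻¹' Ioo (p : ℝ) q ∩ m ⁻¹' (φ '' Icc (p : ℝ) q)ᶜ
    have hA_meas : MeasurableSet A := (hv measurableSet_Ioo).inter
      (hm (isCompact_Icc.image hφ).isClosed.measurableSet.compl)
    have minorant_le_u : A.indicator (fun _ ↦ ENNReal.ofReal q) ≤ᵐ[μ]
        fun x ↦ ENNReal.ofReal (u x) := by
      filter_upwards [hvu, hum] with x hx hxm
      refine indicator_apply_le' (fun hxA ↦ ENNReal.ofReal_le_ofReal ?_) fun _ ↦ zero_le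
      by_contra! hlt
      exact hxA.2 ⟨u x, ⟨hxA.1.1.le.trans hx, hlt.le⟩, hxm⟩
    have minorant_le_v := ae_le_of_withDensity_le (measurable_const.indicator hA_meas)
      ((withDensity_mono minorant_le_u).trans_eq h)
    filter_upwards [minorant_le_v] with x hx hxA
    rw [indicator_of_mem (show x ∈ A from hxA), ENNReal.ofReal_le_ofReal_iff (hv_nonneg x)] at hx
    exact hxA.1.2.not_ge hx
  filter_upwards [ae_all_iff.2 fun p ↦ ae_all_iff.2 (not_separated p), hum] with x hx hxm
  rw [hxm]
  by_contra hne
  obtain ⟨a, b, hab, hsub⟩ := mem_nhds_iff_exists_Ioo_subset.1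
    ((isOpen_compl_singleton.preimage hφ).mem_nhds (Ne.symm hne : v x ∈ φ ⁻¹' {m x}ᶜ))
  obtain ⟨p, hap, hpv⟩ := exists_rat_btwn hab.1
  obtain ⟨q, hvq, hqb⟩ := exists_rat_btwn hab.2
  refine hx p q ⟨⟨hpv, hvq⟩, ?_⟩
  rintro ⟨y, hy, hym⟩
  exact hsub ⟨hap.trans_le hy.1, hy.2.trans_lt hqb⟩ hym

end Densities

lemma continuous_mul_logb (b : ℝ) : Continuous fun y ↦ y * logb b y := by
  simpa only [logb, mul_div_assoc] using continuous_mul_log.div_const (log b)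

section ExpSubstitution

lemma image_exp_univ : exp '' univ = Ioi 0 := by
  rw [image_univ, range_exp]

lemma image_exp_eq_Ioi_inter_preimage_log (s : Set ℝ) : exp '' s = Ioi 0 ∩ log ⁻¹' s := by
  ext x
  constructor
  · rintro ⟨t, ht, rfl⟩
    exact ⟨exp_pos t, by rwa [mem_preimage, log_exp]⟩
  · rintro ⟨hx, hxs⟩
    exact ⟨log x, hxs, exp_log hx⟩

lemma map_log_withDensity_restrict_Ioi (f : ℝ → ENNReal) :
    ((volume.restrict (Ioi (0 : ℝ))).withDensity f).map log =
      volume.withDensity fun t ↦ ENNReal.ofReal (exp t) * f (exp t) := by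
  ext s hs
  rw [Measure.map_apply measurable_log hs, withDensity_apply _ (measurable_log hs),
    withDensity_apply _ hs, Measure.restrict_restrict (measurable_log hs), inter_comm,
    ← image_exp_eq_Ioi_inter_preimage_log, lintegral_image_eq_lintegral_abs_deriv_mul hs
      (fun t _ ↦ (hasDerivAt_exp t).hasDerivWithinAt) exp_injective.injOn]
  simp only [abs_exp]

variable {E : Type*} [NormedAddCommGroup E] [NormedSpace ℝ E]

lemma integral_exp_smul_comp_exp (f : ℝ → E) :
    ∫ t, exp t • f (exp t) = ∫ h in Ioi (0 : ℝ), f h := by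
  rw [← image_exp_univ, integral_image_eq_integral_abs_deriv_smul MeasurableSet.univ
    (fun t _ ↦ (hasDerivAt_exp t).hasDerivWithinAt) exp_injective.injOn]
  simp only [abs_exp, Measure.restrict_univ]

lemma integrable_exp_smul_comp_exp_iff (f : ℝ → E) :
    Integrable (fun t ↦ exp t • f (exp t)) ↔ IntegrableOn f (Ioi (0 : ℝ)) := by
  rw [← image_exp_univ, integrableOn_image_iff_integrableOn_abs_deriv_smul MeasurableSet.univ
    (fun t _ ↦ (hasDerivAt_exp t).hasDerivWithinAt) exp_injective.injOn]
  simp only [abs_exp, integrableOn_univ]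

end ExpSubstitution

section EntropyOfLog

/-- The density `t ↦ exp t * f (exp t)` of `log H`, where `H` is a positive random variable with
density `f` on `(0, ∞)`. -/
noncomputable def logDensity (f : ℝ → ℝ) (t : ℝ) : ℝ :=
  exp t * f (exp t)

variable {f g : ℝ → ℝ} {b : ℝ}

lemma map_log_withDensity_ofReal (f : ℝ → ℝ) :
    ((volume.restrict (Ioi (0 : ℝ))).withDensity fun h ↦ ENNReal.ofReal (f h)).map log =
      volume.withDensity fun t ↦ ENNReal.ofReal (logDensity f t) := by
  simp only [map_log_withDensity_restrict_Ioi, logDensity, ENNReal.ofReal_mul (exp_pos _).le]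

lemma mul_logb_ae_eq_of_map_log (hf : Measurable f) (hf_nonneg : 0 ≤ f) (hg_nonneg : 0 ≤ g)
    (hmap : ((volume.restrict (Ioi (0 : ℝ))).withDensity fun h ↦ ENNReal.ofReal (f h)).map log =
      volume.withDensity fun t ↦ ENNReal.ofReal (g t))
    (hg : AEMeasurable fun t ↦ g t * logb b (g t)) :
    (fun t ↦ g t * logb b (g t)) =ᵐ[volume]
      fun t ↦ logDensity f t * logb b (logDensity f t) :=
  comp_ae_eq_comp_of_withDensity_eq hg_nonneg (measurable_exp.mul (hf.comp measurable_exp))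
    (fun t ↦ mul_nonneg (exp_pos t).le (hf_nonneg _)) (continuous_mul_logb b) hg
    (hmap.symm.trans (map_log_withDensity_ofReal f))

lemma mul_logb_mul {x : ℝ} (hx : x ≠ 0) (y : ℝ) :
    y * logb b (x * y) = y * logb b y + y * logb b x := by
  obtain rfl | hy := eq_or_ne y 0
  · simp only [zero_mul, add_zero]
  · rw [logb_mul hx hy]
    ring

lemma logDensity_mul_logb (f : ℝ → ℝ) (b t : ℝ) :
    logDensity f t * logb b (logDensity f t) =
      exp t • (f (exp t) * logb b (f (exp t)) + f (exp t) * logb b (exp t)) := by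
  rw [logDensity, mul_assoc, mul_logb_mul (exp_ne_zero t), smul_eq_mul]

lemma integrableOn_mul_logb_id (hf : IntegrableOn (fun h ↦ f h * logb b (f h)) (Ioi 0))
    (hf_log : Integrable fun t ↦ logDensity f t * logb b (logDensity f t)) :
    IntegrableOn (fun h ↦ f h * logb b h) (Ioi 0) := by
  simp only [logDensity_mul_logb] at hf_log
  have hsum : IntegrableOn (fun h ↦ f h * logb b (f h) + f h * logb b h) (Ioi 0) :=
    (integrable_exp_smul_comp_exp_iff _).1 hf_log
  simpa only [Pi.sub_def, add_sub_cancel_left] using hsum.sub hf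

lemma integral_logDensity_mul_logb (hf : IntegrableOn (fun h ↦ f h * logb b (f h)) (Ioi 0))
    (hf_id : IntegrableOn (fun h ↦ f h * logb b h) (Ioi 0)) :
    ∫ t, logDensity f t * logb b (logDensity f t) =
      (∫ h in Ioi 0, f h * logb b (f h)) + ∫ h in Ioi 0, f h * logb b h := by
  simp only [logDensity_mul_logb]
  rw [integral_exp_smul_comp_exp fun h ↦ f h * logb b (f h) + f h * logb b h,
    integral_add hf hf_id]

end EntropyOfLog

section WidthFunction

lemma setIntegral_indicator_subgraph {α E : Type*} [NormedAddCommGroup E] [NormedSpace ℝ E]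
    (f : α → ℝ) (φ : ℝ → E) (x : α) :
    ∫ h in Ioi 0, {p : α × ℝ | p.2 ≤ f p.1}.indicator (fun p ↦ φ p.2) (x, h) =
      ∫ h in Ioc 0 (f x), φ h := by
  rw [← Ioi_inter_Iic, ← setIntegral_indicator measurableSet_Iic]
  rfl

variable {α : Type*} [MeasurableSpace α]

/-- The width function `h ↦ μ {f ≥ h}` of `f` with respect to `μ`, written `w_P` for `μ = P` and
`f = dQ/dP`. It is real-valued, so it is `0` by convention where the superlevel set has infinite
measure. -/
def widthFunction (μ : Measure α) (f : α → ℝ) (h : ℝ) : ℝ :=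
  μ.real {x | h ≤ f x}

lemma widthFunction_nonneg (μ : Measure α) (f : α → ℝ) : 0 ≤ widthFunction μ f :=
  fun _ ↦ measureReal_nonneg

lemma measurable_widthFunction (μ : Measure α) (f : α → ℝ) : Measurable (widthFunction μ f) := by
  have hanti : Antitone fun h ↦ μ {x | h ≤ f x} :=
    fun _ _ hab ↦ measure_mono fun _ hx ↦ hab.trans hx
  exact hanti.measurable.ennreal_toReal

variable {μ : Measure α} [SFinite μ] {f : α → ℝ}

section Fubini

variable {E : Type*} [NormedAddCommGroup E] [NormedSpace ℝ E] {φ : ℝ → E}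

lemma integrable_indicator_subgraph (hf : Measurable f) (hfin : ∀ h > 0, μ {x | h ≤ f x} < ⊤)
    (hφ : StronglyMeasurable φ)
    (hint : IntegrableOn (fun h ↦ widthFunction μ f h • φ h) (Ioi 0)) :
    Integrable ({p : α × ℝ | p.2 ≤ f p.1}.indicator fun p ↦ φ p.2)
      (μ.prod (volume.restrict (Ioi 0))) := by
  have hmeas : MeasurableSet {p : α × ℝ | p.2 ≤ f p.1} :=
    measurableSet_le measurable_snd (hf.comp measurable_fst)
  have hlevel (h : ℝ) : MeasurableSet {x | h ≤ f x} := measurableSet_le measurable_const hf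
  have hφ_snd : StronglyMeasurable fun p : α × ℝ ↦ φ p.2 := hφ.comp_measurable measurable_snd
  rw [integrable_prod_iff' (hφ_snd.indicator hmeas).aestronglyMeasurable]
  constructor
  · filter_upwards [ae_restrict_mem measurableSet_Ioi] with h hh
    exact (integrable_indicator_iff (hlevel h)).2 (integrableOn_const (C := φ h) (hfin h hh).ne)
  · refine hint.norm.congr (.of_forall fun h ↦ ?_)
    calc ‖widthFunction μ f h • φ h‖
        = widthFunction μ f h • ‖φ h‖ := by
          rw [norm_smul, norm_of_nonneg (widthFunction_nonneg μ f h), smul_eq_mul]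
      _ = ∫ x, {x | h ≤ f x}.indicator (fun _ ↦ ‖φ h‖) x ∂μ :=
          (integral_indicator_const _ (hlevel h)).symm
      _ = _ := by
          simp only [norm_indicator_eq_indicator_norm]
          rfl

lemma integrable_setIntegral_Ioc (hf : Measurable f) (hfin : ∀ h > 0, μ {x | h ≤ f x} < ⊤)
    (hφ : StronglyMeasurable φ)
    (hint : IntegrableOn (fun h ↦ widthFunction μ f h • φ h) (Ioi 0)) :
    Integrable (fun x ↦ ∫ h in Ioc 0 (f x), φ h) μ := by
  simpa only [setIntegral_indicator_subgraph] using
    (integrable_indicator_subgraph hf hfin hφ hint).integral_prod_left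

lemma integral_widthFunction_smul [CompleteSpace E] (hf : Measurable f)
    (hfin : ∀ h > 0, μ {x | h ≤ f x} < ⊤) (hφ : StronglyMeasurable φ)
    (hint : IntegrableOn (fun h ↦ widthFunction μ f h • φ h) (Ioi 0)) :
    ∫ h in Ioi 0, widthFunction μ f h • φ h = ∫ x, (∫ h in Ioc 0 (f x), φ h) ∂μ := by
  calc ∫ h in Ioi 0, widthFunction μ f h • φ h
      = ∫ h in Ioi 0, ∫ x, {p : α × ℝ | p.2 ≤ f p.1}.indicator (fun p ↦ φ p.2) (x, h) ∂μ :=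
        integral_congr_ae <| .of_forall fun h ↦
          (integral_indicator_const (φ h) (measurableSet_le measurable_const hf)).symm
    _ = ∫ x, (∫ h in Ioi 0, {p : α × ℝ | p.2 ≤ f p.1}.indicator (fun p ↦ φ p.2) (x, h)) ∂μ :=
        (integral_integral_swap (f := fun x h ↦ {p : α × ℝ | p.2 ≤ f p.1}.indicator
          (fun p ↦ φ p.2) (x, h)) (integrable_indicator_subgraph hf hfin hφ hint)).symm
    _ = ∫ x, (∫ h in Ioc 0 (f x), φ h) ∂μ := by simp only [setIntegral_indicator_subgraph]

end Fubini

variable {b : ℝ}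

lemma stronglyMeasurable_logb (b : ℝ) : StronglyMeasurable (logb b) :=
  (measurable_log.div_const (log b)).stronglyMeasurable

lemma setIntegral_Ioc_logb (b : ℝ) {y : ℝ} (hy : 0 ≤ y) :
    ∫ h in Ioc 0 y, logb b h = y * logb b y - y * logb b (exp 1) := by
  simp only [logb, ← intervalIntegral.integral_of_le hy, intervalIntegral.integral_div,
    integral_log, log_exp]
  ring

lemma integrable_mul_logb_of_widthFunction (hf : Measurable f) (hf_nonneg : 0 ≤ f)
    (hf_int : Integrable f μ)
    (hint : IntegrableOn (fun h ↦ widthFunction μ f h * logb b h) (Ioi 0)) :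
    Integrable (fun x ↦ f x * logb b (f x)) μ := by
  have hIoc := integrable_setIntegral_Ioc hf (fun _ ↦ hf_int.measure_ge_lt_top)
    (stronglyMeasurable_logb b) hint
  simp only [setIntegral_Ioc_logb b (hf_nonneg _)] at hIoc
  simpa only [Pi.add_def, sub_add_cancel] using hIoc.add (hf_int.mul_const (logb b (exp 1)))

lemma integral_widthFunction_mul_logb (hf : Measurable f) (hf_nonneg : 0 ≤ f)
    (hf_int : Integrable f μ)
    (hint : IntegrableOn (fun h ↦ widthFunction μ f h * logb b h) (Ioi 0)) :
    ∫ h in Ioi 0, widthFunction μ f h * logb b h =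
      (∫ x, f x * logb b (f x) ∂μ) - (∫ x, f x ∂μ) * logb b (exp 1) := by
  calc ∫ h in Ioi 0, widthFunction μ f h * logb b h
      = ∫ x, (∫ h in Ioc 0 (f x), logb b h) ∂μ :=
        integral_widthFunction_smul hf (fun _ ↦ hf_int.measure_ge_lt_top)
          (stronglyMeasurable_logb b) hint
    _ = ∫ x, (f x * logb b (f x) - f x * logb b (exp 1)) ∂μ := by
        simp only [setIntegral_Ioc_logb b (hf_nonneg _)]
    _ = _ := by
        rw [integral_sub (integrable_mul_logb_of_widthFunction hf hf_nonneg hf_int hint)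
          (hf_int.mul_const _), integral_mul_const]

end WidthFunction

theorem csd_minus_kl_eq_entropy_of_log_general {α : Type*} [MeasurableSpace α]
    (P Q : Measure α) [SigmaFinite P] [IsFiniteMeasure Q] (hQP : Q ≪ P)
    (r : α → ℝ) (hr : r = fun x ↦ (Q.rnDeriv P x).toReal)
    (w : ℝ → ℝ) (hw : w = widthFunction P r)
    (μH : Measure ℝ)
    (hH : μH = (volume.restrict (Ioi (0 : ℝ))).withDensity fun h ↦ ENNReal.ofReal (w h))
    (g : ℝ → ℝ) (hg0 : 0 ≤ g)
    (hg : μH.map log = volume.withDensity fun t ↦ ENNReal.ofReal (g t))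
    (hCS : IntegrableOn (fun h ↦ w h * logb 2 (w h)) (Ioi (0 : ℝ)))
    (hEnt : Integrable (fun t ↦ g t * logb 2 (g t))) :
    Integrable (fun x ↦ logb 2 (r x)) Q ∧
      (-∫ h in Ioi (0 : ℝ), w h * logb 2 (w h)) - (∫ x, logb 2 (r x) ∂Q) =
        (-∫ t, g t * logb 2 (g t)) - Q.real univ * logb 2 (exp 1) := by
  subst hw hH
  have hr_meas : Measurable r := hr ▸ (Q.measurable_rnDeriv P).ennreal_toReal
  have hr_nonneg : 0 ≤ r := hr ▸ fun _ ↦ ENNReal.toReal_nonneg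
  have hr_int : Integrable r P := hr ▸ Measure.integrable_toReal_rnDeriv
  have hr_total : ∫ x, r x ∂P = Q.real univ := hr ▸ Measure.integral_toReal_rnDeriv hQP
  have hKL_iff : Integrable (fun x ↦ r x * logb 2 (r x)) P ↔
      Integrable (fun x ↦ logb 2 (r x)) Q := hr ▸ integrable_rnDeriv_smul_iff hQP
  have hKL_eq : ∫ x, r x * logb 2 (r x) ∂P = ∫ x, logb 2 (r x) ∂Q :=
    hr ▸ integral_rnDeriv_smul hQP
  have hEnt_ae := mul_logb_ae_eq_of_map_log (measurable_widthFunction P r)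
    (widthFunction_nonneg P r) hg0 hg hEnt.aestronglyMeasurable.aemeasurable
  have hlog := integrableOn_mul_logb_id hCS (hEnt.congr hEnt_ae)
  refine ⟨hKL_iff.1 (integrable_mul_logb_of_widthFunction hr_meas hr_nonneg hr_int hlog), ?_⟩
  rw [integral_congr_ae hEnt_ae, integral_logDensity_mul_logb hCS hlog,
    integral_widthFunction_mul_logb hr_meas hr_nonneg hr_int hlog, hKL_eq, hr_total]
  ring

/-- If `H` is a nonnegative random variable with probability density `w_P` (the width
function of `Q ≪ P`), then the channel simulation divergence and the KL divergence
(both in bits) satisfy `D_CS(Q‖P) - D_KL(Q‖P) = h(ln H) - log₂ e`, where `h(ln H)` is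
the differential entropy (in bits) of `ln H`, whose density is `g`. -/
theorem csd_minus_kl_eq_entropy_of_log {α : Type*} [MeasurableSpace α]
    (P Q : Measure α) [IsProbabilityMeasure P] [IsProbabilityMeasure Q]
    (hQP : Q ≪ P)
    (r : α → ℝ) (hr : r = fun x => (Q.rnDeriv P x).toReal)
    (w : ℝ → ℝ) (hw : w = fun h => (P {x | h ≤ r x}).toReal)
    -- `μH` is the law of the random variable `H`, with density `w` on `(0, ∞)`
    (μH : Measure ℝ)
    (hH : μH = (volume.restrict (Set.Ioi (0 : ℝ))).withDensity fun h => ENNReal.ofReal (w h))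
    -- `g` is the density of `ln H` (the law of `ln H` is the pushforward of `μH` by `log`)
    (g : ℝ → ℝ) (hg0 : 0 ≤ g)
    (hg : μH.map Real.log = volume.withDensity fun t => ENNReal.ofReal (g t))
    -- all relevant integrals are assumed finite
    (hCS : IntegrableOn (fun h => w h * logb 2 (w h)) (Set.Ioi (0 : ℝ)))
    (hKL : Integrable (fun x => logb 2 (r x)) Q)
    (hEnt : Integrable (fun t => g t * logb 2 (g t))) :
    (-∫ h in Set.Ioi (0 : ℝ), w h * logb 2 (w h)) - (∫ x, logb 2 (r x) ∂Q)
      = (-∫ t, g t * logb 2 (g t)) - logb 2 (Real.exp 1) := by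
  simpa only [probReal_univ, one_mul] using
    (csd_minus_kl_eq_entropy_of_log_general P Q hQP r hr w hw μH hH g hg0 hg hCS hEnt).2
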